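/- Let H be a real Hilbert space with inner product a and norm |||·|||, let (u_i)_{i≥1} be a complete orthogonal family with a(u_i,u_i) = E_i and 0 < E_1 ≤ E_2 ≤ …, and let B : H → H be the bounded linear operator with B u_i = (E_1/E_i) u_i (so |||B||| ≤ 1). Fix K ≥ 1 and set q := E_1/E_{K+1}. Let P̂ : H → H be linear with |||v − P̂ v||| ≤ γ |||v||| for all v. Suppose v⁽⁰⁾ ∈ H satisfies a(v⁽⁰⁾, u_1) = E_1 and a(v⁽⁰⁾, u_i) = 0 for 2 ≤ i ≤ K, and define the inexact iterates ṽ⁽⁰⁾ := v⁽⁰⁾, ṽ⁽ᵏ⁾ := ṽ⁽ᵏ⁻¹⁾ + P̂ (B ṽ⁽ᵏ⁻¹⁾ − ṽ⁽ᵏ⁻¹⁾). Then for every k ∈ ℕ: |||ṽ⁽ᵏ⁾ − u_1||| ≤ q^k |||v⁽⁰⁾ − u_1||| + 2γ (Σ_{ν=0}^{k−1} (1+2γ)^ν) |||v⁽⁰⁾|||. In particular, if γ ≤ q^k =: tol, then |||ṽ⁽ᵏ⁾ − u_1||| ≤ tol · (|||v⁽⁰⁾ − u_1||| + 2(1+2γ)^k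 |||v⁽⁰⁾|||). (Abstract form of Theorem 4.3 of the paper: convergence of the inexact block iteration.) -/

import Mathlib

open scoped RealInnerProductSpace BigOperators

/-!
Let `e k` be the error, `A = 1 - B` and `Q = 1 - P̂`, so that `e (k + 1) = B (e k) + Q (A (e k))`
and `e k - B ^ k (e 0) = ∑ j < k, B ^ (k - 1 - j) (Q (A (e j)))`. Since `B` is diagonal with
entries in `[0, 1]`, it satisfies `‖B x‖ ^ 2 + ‖A x‖ ^ 2 ≤ ‖x‖ ^ 2`, its dual
`‖B x + A y‖ ^ 2 ≤ ‖x‖ ^ 2 + ‖y‖ ^ 2`, and the smoothing estimate `‖B ^ m (A y)‖ ≤ ‖y‖ / (2 m + 1)`.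

The first estimate of the theorem is Gronwall's. It also gives the second one when `γ` or `k γ ^ 2`
is bounded below, by Bernoulli's inequality. Otherwise, replacing `e j` by `B ^ j (e 0)` in the sum
leaves an error of order `k γ ^ 2`, by the energy inequality and Cauchy–Schwarz, and in the
resulting first order term summation by parts moves `A` across `Q`, where the smoothing of
`B ^ m A` and the decay `‖B ^ j (e 0)‖ ≤ q ^ j ‖e 0‖` leave a bound of order `γ (1 + √(k q ^ k))`.
-/

section Scalar

lemma pow_mul_one_sub_le {t : ℝ} (h0 : 0 ≤ t) (h1 : t ≤ 1) (m : ℕ) :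
    t ^ m * (1 - t) ≤ 1 / (2 * m + 1) := by
  have key : (2 * m + 1) * (t ^ m * (1 - t)) ≤ 1 - t ^ (2 * m + 1) := by
    induction m with
    | zero => simp
    | succ m ih =>
      have amgm : 2 * t ^ (m + 1) ≤ 1 + t ^ (2 * m + 2) := by
        linear_combination sq_nonneg (1 - t ^ (m + 1))
      have := mul_le_mul_of_nonneg_right amgm (sub_nonneg.mpr h1)
      push_cast
      linear_combination this + t * ih
  rw [le_div_iff₀ (by positivity)]
  linarith [pow_nonneg h0 (2 * m + 1)]

lemma one_add_pow_le_one_add_mul_pow {γ : ℝ} (hγ : 0 ≤ γ) {k : ℕ}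
    (h : 1 / 4 ≤ γ ∨ 1 / 2 ≤ k * γ ^ 2) :
    (1 + γ) ^ k ≤ 1 + 2 * γ * (1 + 2 * γ) ^ k := by
  have h1γ : 1 + γ ≠ 0 := by positivity
  set a := γ / (1 + γ) with ha
  have ha0 : 0 ≤ a := by positivity
  have ha1 : a ≤ 1 := (div_le_one (by positivity)).mpr (by linarith)
  have hy : 0 ≤ (1 + γ) ^ k := by positivity
  have lower : (1 + k * a) * (1 + γ) ^ k ≤ (1 + 2 * γ) ^ k := by
    have factor : 1 + 2 * γ = (1 + a) * (1 + γ) := by rw [ha]; field_simp; ring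
    rw [factor, mul_pow]
    gcongr
    exact one_add_mul_le_pow (by linarith) k
  have upper : (1 - k * a) * (1 + γ) ^ k ≤ 1 := by
    have factor : (1 - a) * (1 + γ) = 1 := by rw [ha]; field_simp; ring
    calc (1 - k * a) * (1 + γ) ^ k ≤ (1 - a) ^ k * (1 + γ) ^ k := by
          gcongr
          simpa [sub_eq_add_neg] using one_add_mul_le_pow (a := -a) (by linarith) k
      _ = 1 := by rw [← mul_pow, factor, one_pow]
  have main : (1 + γ) ^ k ≤ 1 + 2 * γ * ((1 + k * a) * (1 + γ) ^ k) := by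
    rcases h with h | h
    · have := mul_le_mul_of_nonneg_right (show 1 / 2 ≤ 2 * γ by linarith)
        (show 0 ≤ (1 + k * a) * (1 + γ) ^ k by positivity)
      linarith
    · have coeff : 1 ≤ 2 * γ * (1 + k * a) := by
        have : 2 * γ * (1 + k * a) = (2 * γ * (1 + γ) + 2 * (k * γ ^ 2)) / (1 + γ) := by
          rw [ha]; field_simp
        rw [this, one_le_div (by positivity)]
        nlinarith
      linarith [mul_le_mul_of_nonneg_right coeff hy]
  exact main.trans (by gcongr)

lemma perturbation_le_two_mul_pow {γ θ : ℝ} (hγ : 0 ≤ γ) (hγ4 : γ ≤ 1 / 4) (hγθ : γ ≤ θ) (k : ℕ) :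
    γ * (3 / 2 + θ + √(k * θ / 2)) + 7 / 2 * (k * γ ^ 2) ≤ 2 * θ * (1 + 2 * γ) ^ k := by
  have hθ : 0 ≤ θ := hγ.trans hγθ
  have amgm : γ * √(k * θ / 2) ≤ θ / 4 + k * γ ^ 2 / 2 := by
    have hsq : √(k * θ / 2) ^ 2 = k * θ / 2 := Real.sq_sqrt (by positivity)
    refine le_of_sq_le_sq ?_ (by positivity)
    rw [mul_pow, hsq]
    linear_combination sq_nonneg (θ / 4 - k * γ ^ 2 / 2)
  have bernoulli : 1 + k * (2 * γ) ≤ (1 + 2 * γ) ^ k := one_add_mul_le_pow (by linarith) k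
  calc γ * (3 / 2 + θ + √(k * θ / 2)) + 7 / 2 * (k * γ ^ 2)
      ≤ γ * (3 / 2) + γ * θ + θ / 4 + 4 * (k * γ * γ) := by linarith
    _ ≤ θ * (3 / 2) + 1 / 4 * θ + θ / 4 + 4 * (k * γ * θ) := by gcongr
    _ = 2 * θ * (1 + k * (2 * γ)) := by ring
    _ ≤ 2 * θ * (1 + 2 * γ) ^ k := by gcongr

end Scalar

section CompleteOrthogonalFamily

variable {ι H : Type*} [NormedAddCommGroup H] [InnerProductSpace ℝ H] {u : ι → H}

/-- `u` is a complete orthogonal family: nonzero, pairwise orthogonal vectors with dense span. The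
vectors need not be normalized and the space need not be complete. -/
structure IsCompleteOrthogonal (u : ι → H) : Prop where
  ne_zero : ∀ i, u i ≠ 0
  orthogonal : Pairwise fun i j => ⟪u i, u j⟫ = 0
  dense_span : (Submodule.span ℝ (Set.range u)).topologicalClosure = ⊤

namespace IsCompleteOrthogonal

lemma hasSum_sq_inner_div_sq_norm (hu : IsCompleteOrthogonal u) (x : H) :
    HasSum (fun i => ⟪u i, x⟫ ^ 2 / ‖u i‖ ^ 2) (‖x‖ ^ 2) := by
  let Φ := UniformSpace.Completion.toComplL (𝕜 := ℝ) (E := H)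
  let w : ι → UniformSpace.Completion H := fun i => ‖u i‖⁻¹ • Φ (u i)
  have inner_Φ (y z : H) : ⟪Φ y, Φ z⟫ = ⟪y, z⟫ := UniformSpace.Completion.inner_coe y z
  have hw : Orthonormal ℝ w := by
    refine ⟨fun i => ?_, fun i j hij => ?_⟩
    · have : ‖Φ (u i)‖ = ‖u i‖ := UniformSpace.Completion.norm_coe _
      rw [norm_smul, this, norm_inv, norm_norm,
        inv_mul_cancel₀ (norm_ne_zero_iff.mpr (hu.ne_zero i))]
    · simp only [w, inner_smul_left, inner_smul_right, inner_Φ, hu.orthogonal hij, mul_zero]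
  have span_le : (Submodule.span ℝ (Set.range u)).map (Φ : H →ₗ[ℝ] UniformSpace.Completion H) ≤
      Submodule.span ℝ (Set.range w) := by
    rw [Submodule.map_span, Submodule.span_le]
    rintro _ ⟨_, ⟨i, rfl⟩, rfl⟩
    have : Φ (u i) = ‖u i‖ • w i := (smul_inv_smul₀ (norm_ne_zero_iff.mpr (hu.ne_zero i)) _).symm
    exact this ▸ Submodule.smul_mem _ _ (Submodule.subset_span ⟨i, rfl⟩)
  have hwdense : ⊤ ≤ (Submodule.span ℝ (Set.range w)).topologicalClosure :=
    (UniformSpace.Completion.denseRange_coe.topologicalClosure_map_submodule (f := Φ)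
      hu.dense_span).ge.trans (Submodule.topologicalClosure_mono span_le)
  have parseval := (HilbertBasis.mk hw hwdense).hasSum_inner_mul_inner (Φ x) (Φ x)
  rw [HilbertBasis.coe_mk, inner_Φ, real_inner_self_eq_norm_sq] at parseval
  refine parseval.congr_fun fun i => ?_
  simp only [w, inner_smul_left, inner_smul_right, inner_Φ, real_inner_comm (u i) x]
  simp [field]

lemma norm_sq_add_norm_sq_le (hu : IsCompleteOrthogonal u) {x₁ x₂ y₁ y₂ : H}
    (h : ∀ i, ⟪u i, x₁⟫ ^ 2 + ⟪u i, x₂⟫ ^ 2 ≤ ⟪u i, y₁⟫ ^ 2 + ⟪u i, y₂⟫ ^ 2) :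
    ‖x₁‖ ^ 2 + ‖x₂‖ ^ 2 ≤ ‖y₁‖ ^ 2 + ‖y₂‖ ^ 2 := by
  have parseval := hu.hasSum_sq_inner_div_sq_norm
  refine hasSum_le (fun i => ?_) ((parseval x₁).add (parseval x₂))
    ((parseval y₁).add (parseval y₂))
  rw [← add_div, ← add_div]
  exact div_le_div_of_nonneg_right (h i) (sq_nonneg _)

lemma norm_le_mul_norm (hu : IsCompleteOrthogonal u) {x y : H} {M : ℝ} (hM : 0 ≤ M)
    (h : ∀ i, |⟪u i, x⟫| ≤ M * |⟪u i, y⟫|) : ‖x‖ ≤ M * ‖y‖ := by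
  have hsq (i : ι) : ⟪u i, x⟫ ^ 2 ≤ ⟪u i, M • y⟫ ^ 2 := by
    rw [sq_le_sq, inner_smul_right, abs_mul, abs_of_nonneg hM]
    exact h i
  have := hu.norm_sq_add_norm_sq_le (x₁ := x) (x₂ := 0) (y₁ := M • y) (y₂ := 0)
    (by simpa using hsq)
  rw [← abs_of_nonneg hM, ← Real.norm_eq_abs, ← norm_smul]
  exact le_of_sq_le_sq (by simpa using this) (norm_nonneg _)

end IsCompleteOrthogonal

/-- `B` is a positive contraction, diagonal with entries `c i ∈ [0, 1]` in the complete orthogonal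
family `u`. -/
structure IsDiagonalContraction (u : ι → H) (c : ι → ℝ) (B : H →L[ℝ] H) : Prop
    extends IsCompleteOrthogonal u where
  apply_eq : ∀ i, B (u i) = c i • u i
  nonneg : ∀ i, 0 ≤ c i
  le_one : ∀ i, c i ≤ 1

namespace IsDiagonalContraction

variable {c : ι → ℝ} {B : H →L[ℝ] H}

lemma inner_apply (hB : IsDiagonalContraction u c B) (i : ι) (x : H) :
    ⟪u i, B x⟫ = c i * ⟪u i, x⟫ := by
  suffices (innerSL ℝ (u i)).comp B = c i • innerSL ℝ (u i) from DFunLike.congr_fun this x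
  refine ContinuousLinearMap.ext_on
    (Submodule.dense_iff_topologicalClosure_eq_top.mpr hB.dense_span) ?_
  rintro _ ⟨j, rfl⟩
  obtain rfl | hij := eq_or_ne i j
  · simp [hB.apply_eq]
  · simp [hB.apply_eq, hB.orthogonal hij]

lemma inner_pow_apply (hB : IsDiagonalContraction u c B) (i : ι) (m : ℕ) (x : H) :
    ⟪u i, (B ^ m) x⟫ = c i ^ m * ⟪u i, x⟫ := by
  induction m with
  | zero => simp
  | succ m ih => rw [pow_succ', mul_apply_eq_comp, hB.inner_apply, ih]; ring

lemma sq_norm_apply_add_sq_norm_sub_le (hB : IsDiagonalContraction u c B) (x : H) :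
    ‖B x‖ ^ 2 + ‖x - B x‖ ^ 2 ≤ ‖x‖ ^ 2 := by
  have := hB.norm_sq_add_norm_sq_le (x₁ := B x) (x₂ := x - B x) (y₁ := x) (y₂ := 0) fun i => by
    have hc : c i ^ 2 + (1 - c i) ^ 2 ≤ 1 := by nlinarith [hB.nonneg i, hB.le_one i]
    rw [inner_sub_right, hB.inner_apply, inner_zero_right]
    linarith [mul_le_mul_of_nonneg_right hc (sq_nonneg ⟪u i, x⟫)]
  simpa using this

lemma sq_norm_apply_add_sub_le (hB : IsDiagonalContraction u c B) (x y : H) :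
    ‖B x + (y - B y)‖ ^ 2 ≤ ‖x‖ ^ 2 + ‖y‖ ^ 2 := by
  have := hB.norm_sq_add_norm_sq_le (x₁ := B x + (y - B y)) (x₂ := 0) (y₁ := x) (y₂ := y)
    fun i => by
    rw [inner_add_right, inner_sub_right, hB.inner_apply, hB.inner_apply, inner_zero_right]
    have := hB.nonneg i
    have := sub_nonneg.mpr (hB.le_one i)
    set s := ⟪u i, x⟫
    set t := ⟪u i, y⟫
    have convex : (c i * s + (t - c i * t)) ^ 2 ≤ c i * s ^ 2 + (1 - c i) * t ^ 2 := by
      have : 0 ≤ c i * (1 - c i) * (s - t) ^ 2 := by positivity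
      linarith
    have : 0 ≤ (1 - c i) * s ^ 2 + c i * t ^ 2 := by positivity
    linarith
  simpa using this

lemma norm_pow_apply_le_pow_mul (hB : IsDiagonalContraction u c B) {q : ℝ} {x : H} (hq : 0 ≤ q)
    (hx : ∀ i, ⟪u i, x⟫ ≠ 0 → c i ≤ q) (m : ℕ) : ‖(B ^ m) x‖ ≤ q ^ m * ‖x‖ := by
  refine hB.norm_le_mul_norm (by positivity) fun i => ?_
  rw [hB.inner_pow_apply, abs_mul, abs_of_nonneg (pow_nonneg (hB.nonneg i) m)]
  obtain h | h := eq_or_ne ⟪u i, x⟫ 0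
  · simp [h]
  · gcongr
    exacts [hB.nonneg i, hx i h]

lemma norm_pow_apply_le (hB : IsDiagonalContraction u c B) (m : ℕ) (x : H) :
    ‖(B ^ m) x‖ ≤ ‖x‖ := by
  simpa using hB.norm_pow_apply_le_pow_mul zero_le_one (fun i _ => hB.le_one i) m (x := x)

lemma norm_apply_le (hB : IsDiagonalContraction u c B) (x : H) : ‖B x‖ ≤ ‖x‖ := by
  simpa using hB.norm_pow_apply_le 1 x

lemma norm_pow_apply_sub_le (hB : IsDiagonalContraction u c B) (m : ℕ) (x : H) :
    ‖(B ^ m) (x - B x)‖ ≤ ‖x‖ / (2 * m + 1) := by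
  rw [div_eq_mul_one_div, mul_comm]
  refine hB.norm_le_mul_norm (by positivity) fun i => ?_
  have hc := pow_mul_one_sub_le (hB.nonneg i) (hB.le_one i) m
  have hc0 : 0 ≤ c i ^ m * (1 - c i) :=
    mul_nonneg (pow_nonneg (hB.nonneg i) m) (sub_nonneg.mpr (hB.le_one i))
  have : ⟪u i, (B ^ m) (x - B x)⟫ = c i ^ m * (1 - c i) * ⟪u i, x⟫ := by
    rw [hB.inner_pow_apply, inner_sub_right, hB.inner_apply]; ring
  rw [this, abs_mul, abs_of_nonneg hc0]
  gcongr

end IsDiagonalContraction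

end CompleteOrthogonalFamily

section Duhamel

variable {H : Type*} [NormedAddCommGroup H] [NormedSpace ℝ H]

/-- The Duhamel sum `∑ j < k, B ^ (k - 1 - j) (w j)`, in recursive form: the orbit from `0` of the
affine recursion `z ↦ B z + w j`. -/
def duhamel (B : H →L[ℝ] H) (w : ℕ → H) : ℕ → H
  | 0 => 0
  | k + 1 => B (duhamel B w k) + w k

variable {B : H →L[ℝ] H} {w z : ℕ → H}

lemma eq_pow_apply_add_duhamel (hz : ∀ k, z (k + 1) = B (z k) + w k) (k : ℕ) :
    z k = (B ^ k) (z 0) + duhamel B w k := by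
  induction k with
  | zero => simp [duhamel]
  | succ k ih =>
    rw [hz, duhamel, pow_succ', mul_apply_eq_comp, ← add_assoc, ← map_add, ← ih]

lemma duhamel_add (w₁ w₂ : ℕ → H) (k : ℕ) :
    duhamel B (fun j => w₁ j + w₂ j) k = duhamel B w₁ k + duhamel B w₂ k := by
  induction k with
  | zero => simp [duhamel]
  | succ k ih => rw [duhamel, duhamel, duhamel, ih, map_add]; abel

lemma duhamel_add_index (n k : ℕ) :
    duhamel B w (n + k) = (B ^ k) (duhamel B w n) + duhamel B (fun j => w (n + j)) k :=
  eq_pow_apply_add_duhamel (z := fun k => duhamel B w (n + k)) (fun _ => rfl) k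

lemma norm_duhamel_le (hB : ∀ x, ‖B x‖ ≤ ‖x‖) (w : ℕ → H) (k : ℕ) :
    ‖duhamel B w k‖ ≤ ∑ j ∈ Finset.range k, ‖w j‖ := by
  induction k with
  | zero => simp [duhamel]
  | succ k ih =>
    rw [duhamel, Finset.sum_range_succ]
    exact (norm_add_le _ _).trans (add_le_add_left ((hB _).trans ih) _)

-- Summation by parts: the defect `1 - B` moves from the right of `Q` to its left.
lemma duhamel_sub_add_apply (Q : H →ₗ[ℝ] H) (x : H) (k : ℕ) :
    duhamel B (fun j => Q ((B ^ j) x - B ((B ^ j) x))) (k + 1) + Q ((B ^ (k + 1)) x) =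
      (B ^ k) (Q x) +
        duhamel B (fun j => Q ((B ^ (j + 1)) x) - B (Q ((B ^ (j + 1)) x))) k := by
  have pow_apply (m : ℕ) (y : H) : (B ^ (m + 1)) y = B ((B ^ m) y) := by
    rw [pow_succ', mul_apply_eq_comp]
  set F := duhamel B fun j => Q ((B ^ j) x - B ((B ^ j) x)) with hF
  have step (k : ℕ) : F (k + 1 + 1) + Q ((B ^ (k + 1 + 1)) x) =
      B (F (k + 1) + Q ((B ^ (k + 1)) x)) +
        (Q ((B ^ (k + 1)) x) - B (Q ((B ^ (k + 1)) x))) := by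
    rw [hF, duhamel, ← hF, pow_apply (k + 1), map_sub, map_add]
    abel
  have := eq_pow_apply_add_duhamel (z := fun k => F (k + 1) + Q ((B ^ (k + 1)) x)) step k
  simpa [hF, duhamel] using this

lemma sum_norm_map_le {Q : H →ₗ[ℝ] H} {γ : ℝ} (hQ : ∀ v, ‖Q v‖ ≤ γ * ‖v‖) (y : ℕ → H)
    (k : ℕ) :
    ∑ j ∈ Finset.range k, ‖Q (y j)‖ ≤ γ * ∑ j ∈ Finset.range k, ‖y j‖ := by
  rw [Finset.mul_sum]
  exact Finset.sum_le_sum fun j _ => hQ (y j)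

end Duhamel

namespace IsDiagonalContraction

variable {ι H : Type*} [NormedAddCommGroup H] [InnerProductSpace ℝ H]
  {u : ι → H} {c : ι → ℝ} {B : H →L[ℝ] H}

lemma sum_sq_norm_sub_le (hB : IsDiagonalContraction u c B) {w z : ℕ → H}
    (hz : ∀ k, z (k + 1) = B (z k) + w k) (k : ℕ) :
    ∑ j ∈ Finset.range k, ‖z j - B (z j)‖ ^ 2 ≤
      (‖z 0‖ + ∑ j ∈ Finset.range k, ‖w j‖) ^ 2 := by
  have norm_le (j : ℕ) : ‖z j‖ ≤ ‖z 0‖ + ∑ i ∈ Finset.range j, ‖w i‖ := by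
    rw [eq_pow_apply_add_duhamel hz j]
    exact (norm_add_le _ _).trans
      (add_le_add (hB.norm_pow_apply_le j _) (norm_duhamel_le hB.norm_apply_le w j))
  have energy (k : ℕ) : ‖z k‖ ^ 2 + ∑ j ∈ Finset.range k, ‖z j - B (z j)‖ ^ 2 ≤
      (‖z 0‖ + ∑ j ∈ Finset.range k, ‖w j‖) ^ 2 := by
    induction k with
    | zero => simp
    | succ k ih =>
      have hstep : ‖z (k + 1)‖ ^ 2 ≤ (‖B (z k)‖ + ‖w k‖) ^ 2 := by
        rw [hz]; gcongr; exact norm_add_le _ _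
      have hcross : ‖B (z k)‖ * ‖w k‖ ≤ (‖z 0‖ + ∑ i ∈ Finset.range k, ‖w i‖) * ‖w k‖ := by
        gcongr; exact (hB.norm_apply_le _).trans (norm_le k)
      rw [Finset.sum_range_succ, Finset.sum_range_succ]
      linarith [hB.sq_norm_apply_add_sq_norm_sub_le (z k)]
  linarith [energy k, sq_nonneg ‖z k‖]

lemma sum_norm_sub_le (hB : IsDiagonalContraction u c B) {w z : ℕ → H}
    (hz : ∀ k, z (k + 1) = B (z k) + w k) (k : ℕ) :
    ∑ j ∈ Finset.range k, ‖z j - B (z j)‖ ≤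
      √k * (‖z 0‖ + ∑ j ∈ Finset.range k, ‖w j‖) := by
  refine le_of_sq_le_sq ?_ (by positivity)
  calc (∑ j ∈ Finset.range k, ‖z j - B (z j)‖) ^ 2
      ≤ k * ∑ j ∈ Finset.range k, ‖z j - B (z j)‖ ^ 2 := by
        simpa using sq_sum_le_card_mul_sum_sq (s := Finset.range k) (f := fun j => ‖z j - B (z j)‖)
    _ ≤ k * (‖z 0‖ + ∑ j ∈ Finset.range k, ‖w j‖) ^ 2 := by
        gcongr; exact hB.sum_sq_norm_sub_le hz k
    _ = (√k * (‖z 0‖ + ∑ j ∈ Finset.range k, ‖w j‖)) ^ 2 := by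
        rw [mul_pow, Real.sq_sqrt (Nat.cast_nonneg k)]

lemma sq_norm_duhamel_sub_le (hB : IsDiagonalContraction u c B) (y : ℕ → H) (k : ℕ) :
    ‖duhamel B (fun j => y j - B (y j)) k‖ ^ 2 ≤ ∑ j ∈ Finset.range k, ‖y j‖ ^ 2 := by
  induction k with
  | zero => simp [duhamel]
  | succ k ih =>
    rw [duhamel, Finset.sum_range_succ]
    linarith [hB.sq_norm_apply_add_sub_le (duhamel B (fun j => y j - B (y j)) k) (y k)]

lemma norm_pow_apply_duhamel_sub_le (hB : IsDiagonalContraction u c B) {y : ℕ → H} {M : ℝ}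
    (hy : ∀ j, ‖y j‖ ≤ M) (m n : ℕ) :
    ‖(B ^ m) (duhamel B (fun j => y j - B (y j)) n)‖ ≤ n * (M / (2 * m + 1)) := by
  have hM : 0 ≤ M := (norm_nonneg _).trans (hy 0)
  induction n generalizing m with
  | zero => simp [duhamel]
  | succ n ih =>
    have hprev := ih (m + 1)
    rw [pow_succ, mul_apply_eq_comp] at hprev
    rw [duhamel, map_add, Nat.cast_succ, add_one_mul]
    refine (norm_add_le _ _).trans (add_le_add (hprev.trans ?_) ?_)
    · gcongr; simp
    · exact (hB.norm_pow_apply_sub_le m _).trans (by gcongr; exact hy n)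

-- The first half of the sum is controlled by the decay of `B ^ m (1 - B)`, the second half by the
-- decay of `y`.
lemma norm_duhamel_sub_le_of_geometric (hB : IsDiagonalContraction u c B) {y : ℕ → H} {q M : ℝ}
    (hq0 : 0 ≤ q) (hq1 : q ≤ 1) (hM : 0 ≤ M) (hy : ∀ j, ‖y j‖ ≤ q ^ (j + 1) * M) (k : ℕ) :
    ‖duhamel B (fun j => y j - B (y j)) k‖ ≤
      (1 / 2 + √((k + 1 : ℕ) * q ^ (k + 1) / 2)) * M := by
  obtain ⟨n, m, rfl, hnm, hmn⟩ : ∃ n m, k = n + m ∧ n ≤ m ∧ m ≤ n + 1 :=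
    ⟨k / 2, k - k / 2, by omega, by omega, by omega⟩
  have hy_le (j : ℕ) : ‖y j‖ ≤ M :=
    (hy j).trans (mul_le_of_le_one_left hM (pow_le_one₀ hq0 hq1))
  have early : ‖(B ^ m) (duhamel B (fun j => y j - B (y j)) n)‖ ≤ 1 / 2 * M := by
    refine (hB.norm_pow_apply_duhamel_sub_le hy_le m n).trans ?_
    have : (n : ℝ) ≤ m := mod_cast hnm
    rw [← mul_div_assoc, div_le_iff₀ (by positivity)]
    nlinarith
  have late : ‖duhamel B (fun j => y (n + j) - B (y (n + j))) m‖ ≤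
      √((n + m + 1 : ℕ) * q ^ (n + m + 1) / 2) * M := by
    refine le_of_sq_le_sq ?_ (by positivity)
    rw [mul_pow, Real.sq_sqrt (by positivity)]
    have hterm (j : ℕ) : ‖y (n + j)‖ ^ 2 ≤ q ^ (n + m + 1) * M ^ 2 := by
      calc ‖y (n + j)‖ ^ 2 ≤ (q ^ (n + j + 1) * M) ^ 2 := by gcongr; exact hy _
        _ = q ^ (2 * (n + j + 1)) * M ^ 2 := by ring
        _ ≤ q ^ (n + m + 1) * M ^ 2 := by
          gcongr ?_ * _; exact pow_le_pow_of_le_one hq0 hq1 (by omega)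
    have hm : (m : ℝ) ≤ (n + m + 1 : ℕ) / 2 := by
      have : (m : ℝ) ≤ n + 1 := mod_cast hmn
      push_cast; linarith
    calc _ ≤ ∑ j ∈ Finset.range m, ‖y (n + j)‖ ^ 2 := hB.sq_norm_duhamel_sub_le _ m
      _ ≤ m * (q ^ (n + m + 1) * M ^ 2) := by
        simpa using Finset.sum_le_card_nsmul (Finset.range m) _ _ fun j _ => hterm j
      _ ≤ (n + m + 1 : ℕ) / 2 * (q ^ (n + m + 1) * M ^ 2) := by gcongr
      _ = _ := by ring
  rw [duhamel_add_index, add_mul]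
  exact (norm_add_le _ _).trans (add_le_add early late)

lemma norm_duhamel_apply_sub_le (hB : IsDiagonalContraction u c B) {Q : H →ₗ[ℝ] H} {γ q : ℝ}
    (hγ : 0 ≤ γ) (hQ : ∀ v, ‖Q v‖ ≤ γ * ‖v‖) {x : H} (hq0 : 0 ≤ q) (hq1 : q ≤ 1)
    (hx : ∀ j, ‖(B ^ j) x‖ ≤ q ^ j * ‖x‖) (k : ℕ) :
    ‖duhamel B (fun j => Q ((B ^ j) x - B ((B ^ j) x))) k‖ ≤
      γ * (3 / 2 + q ^ k + √(k * q ^ k / 2)) * ‖x‖ := by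
  have hQx (j : ℕ) : ‖Q ((B ^ j) x)‖ ≤ q ^ j * (γ * ‖x‖) :=
    (hQ _).trans ((mul_le_mul_of_nonneg_left (hx j) hγ).trans_eq (by ring))
  cases k with
  | zero => simp only [duhamel, norm_zero]; positivity
  | succ k =>
    rw [eq_sub_of_add_eq (duhamel_sub_add_apply Q x k)]
    refine (norm_sub_le _ _).trans ?_
    have hsum := (norm_add_le ((B ^ k) (Q x)) _).trans
      (add_le_add ((hB.norm_pow_apply_le k _).trans (hQ x))
        (hB.norm_duhamel_sub_le_of_geometric hq0 hq1 (by positivity) (fun j => hQx (j + 1)) k))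
    linarith [hQx (k + 1)]

section PerturbedIteration

variable {Q : H →ₗ[ℝ] H} {γ : ℝ} {e : ℕ → H}

lemma norm_perturbed_sub_pow_le (hB : IsDiagonalContraction u c B) (hγ : 0 ≤ γ)
    (hQ : ∀ v, ‖Q v‖ ≤ γ * ‖v‖) (he : ∀ k, e (k + 1) = B (e k) + Q (e k - B (e k))) (k : ℕ) :
    ‖e k - (B ^ k) (e 0)‖ ≤ γ * (∑ ν ∈ Finset.range k, (1 + γ) ^ ν) * ‖e 0‖ := by
  have defect_le (x : H) : ‖Q (x - B x)‖ ≤ γ * ‖x‖ :=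
    (hQ _).trans (by gcongr; simpa using hB.norm_pow_apply_sub_le 0 x)
  have norm_le (j : ℕ) : ‖e j‖ ≤ (1 + γ) ^ j * ‖e 0‖ := by
    induction j with
    | zero => simp
    | succ j ih =>
      calc ‖e (j + 1)‖ ≤ ‖B (e j)‖ + ‖Q (e j - B (e j))‖ := he j ▸ norm_add_le _ _
        _ ≤ (1 + γ) * ‖e j‖ := by linarith [hB.norm_apply_le (e j), defect_le (e j)]
        _ ≤ (1 + γ) * ((1 + γ) ^ j * ‖e 0‖) := by gcongr
        _ = (1 + γ) ^ (j + 1) * ‖e 0‖ := by ring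
  rw [sub_eq_of_eq_add' (eq_pow_apply_add_duhamel he k), mul_assoc, Finset.sum_mul, Finset.mul_sum]
  refine (norm_duhamel_le hB.norm_apply_le _ k).trans (Finset.sum_le_sum fun j _ => ?_)
  exact (defect_le _).trans (by gcongr; exact norm_le j)

lemma sum_norm_perturbed_sub_le (hB : IsDiagonalContraction u c B)
    (hQ : ∀ v, ‖Q v‖ ≤ γ * ‖v‖) (he : ∀ k, e (k + 1) = B (e k) + Q (e k - B (e k))) {k : ℕ}
    (hk : k * γ ^ 2 ≤ 1 / 2) :
    ∑ j ∈ Finset.range k, ‖e j - B (e j)‖ ≤ 7 / 2 * √k * ‖e 0‖ := by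
  set S := ∑ j ∈ Finset.range k, ‖e j - B (e j)‖
  have hS : 0 ≤ S := by positivity
  have self_bound : S ≤ √k * (‖e 0‖ + γ * S) := by
    refine (hB.sum_norm_sub_le he k).trans ?_
    gcongr
    exact sum_norm_map_le hQ _ k
  have small : √k * γ ≤ 5 / 7 := by
    refine le_of_sq_le_sq ?_ (by norm_num)
    rw [mul_pow, Real.sq_sqrt (Nat.cast_nonneg k)]
    linarith
  linarith [mul_le_mul_of_nonneg_right small hS]

lemma norm_perturbed_sub_pow_le_of_geometric (hB : IsDiagonalContraction u c B) (hγ : 0 ≤ γ)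
    (hQ : ∀ v, ‖Q v‖ ≤ γ * ‖v‖) (he : ∀ k, e (k + 1) = B (e k) + Q (e k - B (e k)))
    {q : ℝ} (hq0 : 0 ≤ q) (hq1 : q ≤ 1) (hx : ∀ j, ‖(B ^ j) (e 0)‖ ≤ q ^ j * ‖e 0‖) {k : ℕ}
    (hk : k * γ ^ 2 ≤ 1 / 2) :
    ‖e k - (B ^ k) (e 0)‖ ≤
      (γ * (3 / 2 + q ^ k + √(k * q ^ k / 2)) + 7 / 2 * (k * γ ^ 2)) * ‖e 0‖ := by
  let d : ℕ → H := fun j => e j - (B ^ j) (e 0)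
  have hd (j : ℕ) : d (j + 1) = B (d j) + Q (e j - B (e j)) := by
    simp only [d, he, pow_succ', mul_apply_eq_comp, map_sub]; abel
  have hsplit : d k = duhamel B (fun j => Q ((B ^ j) (e 0) - B ((B ^ j) (e 0)))) k +
      duhamel B (fun j => Q (d j - B (d j))) k := by
    have : d k = duhamel B (fun j => Q (e j - B (e j))) k :=
      sub_eq_of_eq_add' (eq_pow_apply_add_duhamel he k)
    rw [← duhamel_add, this]
    congr 1 with j
    rw [← map_add]; congr 1; simp only [d, map_sub]; abel
  have defect_sum : ∑ j ∈ Finset.range k, ‖d j - B (d j)‖ ≤ 7 / 2 * (k * γ) * ‖e 0‖ := by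
    have hd0 : ‖d 0‖ = 0 := by simp [d]
    calc ∑ j ∈ Finset.range k, ‖d j - B (d j)‖
        ≤ √k * ∑ j ∈ Finset.range k, ‖Q (e j - B (e j))‖ := by
          simpa [hd0] using hB.sum_norm_sub_le hd k
      _ ≤ √k * (γ * ∑ j ∈ Finset.range k, ‖e j - B (e j)‖) := by
          gcongr; exact sum_norm_map_le hQ _ k
      _ ≤ √k * (γ * (7 / 2 * √k * ‖e 0‖)) := by
          gcongr; exact hB.sum_norm_perturbed_sub_le hQ he hk
      _ = 7 / 2 * (√k * √k * γ) * ‖e 0‖ := by ring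
      _ = 7 / 2 * (k * γ) * ‖e 0‖ := by rw [Real.mul_self_sqrt (Nat.cast_nonneg k)]
  have second_order : ‖duhamel B (fun j => Q (d j - B (d j))) k‖ ≤
      7 / 2 * (k * γ ^ 2) * ‖e 0‖ := by
    calc _ ≤ ∑ j ∈ Finset.range k, ‖Q (d j - B (d j))‖ := norm_duhamel_le hB.norm_apply_le _ k
      _ ≤ γ * ∑ j ∈ Finset.range k, ‖d j - B (d j)‖ := sum_norm_map_le hQ _ k
      _ ≤ γ * (7 / 2 * (k * γ) * ‖e 0‖) := by gcongr
      _ = 7 / 2 * (k * γ ^ 2) * ‖e 0‖ := by ring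
  change ‖d k‖ ≤ _
  rw [hsplit, add_mul]
  exact (norm_add_le _ _).trans
    (add_le_add (hB.norm_duhamel_apply_sub_le hγ hQ hq0 hq1 hx k) second_order)

lemma norm_perturbed_sub_pow_le_of_le_pow (hB : IsDiagonalContraction u c B) (hγ : 0 ≤ γ)
    (hQ : ∀ v, ‖Q v‖ ≤ γ * ‖v‖) (he : ∀ k, e (k + 1) = B (e k) + Q (e k - B (e k)))
    {q : ℝ} (hq0 : 0 ≤ q) (hq1 : q ≤ 1) (hx : ∀ j, ‖(B ^ j) (e 0)‖ ≤ q ^ j * ‖e 0‖) {k : ℕ}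
    (hγq : γ ≤ q ^ k) :
    ‖e k - (B ^ k) (e 0)‖ ≤ 2 * q ^ k * (1 + 2 * γ) ^ k * ‖e 0‖ := by
  by_cases hlarge : 1 / 4 ≤ γ ∨ 1 / 2 ≤ k * γ ^ 2
  · refine (hB.norm_perturbed_sub_pow_le hγ hQ he k).trans ?_
    refine mul_le_mul_of_nonneg_right ?_ (norm_nonneg _)
    calc γ * ∑ ν ∈ Finset.range k, (1 + γ) ^ ν = (1 + γ) ^ k - 1 := by
          simpa using mul_geom_sum (1 + γ) k
      _ ≤ 2 * γ * (1 + 2 * γ) ^ k := by linarith [one_add_pow_le_one_add_mul_pow hγ hlarge]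
      _ ≤ 2 * q ^ k * (1 + 2 * γ) ^ k := by gcongr
  · push Not at hlarge
    refine (hB.norm_perturbed_sub_pow_le_of_geometric hγ hQ he hq0 hq1 hx hlarge.2.le).trans ?_
    exact mul_le_mul_of_nonneg_right (perturbation_le_two_mul_pow hγ hlarge.1.le hγq k)
      (norm_nonneg _)

end PerturbedIteration

end IsDiagonalContraction

section InexactIteration

variable {ι H : Type*} [NormedAddCommGroup H] [InnerProductSpace ℝ H]

lemma isDiagonalContraction_of_eigenvalues {u : ι → H} {E : ι → ℝ} {i₀ : ι} (hpos : 0 < E i₀)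
    (hmin : ∀ i, E i₀ ≤ E i) (hnorm : ∀ i, ⟪u i, u i⟫ = E i)
    (horth : ∀ i j, i ≠ j → ⟪u i, u j⟫ = 0)
    (hcomplete : (Submodule.span ℝ (Set.range u)).topologicalClosure = ⊤)
    {B : H →L[ℝ] H} (hB : ∀ i, B (u i) = (E i₀ / E i) • u i) :
    IsDiagonalContraction u (fun i => E i₀ / E i) B where
  ne_zero i := inner_self_ne_zero.mp (hnorm i ▸ (hpos.trans_le (hmin i)).ne')
  orthogonal := fun i j => horth i j
  dense_span := hcomplete
  apply_eq := hB
  nonneg i := div_nonneg hpos.le (hpos.le.trans (hmin i))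
  le_one i := div_le_one_of_le₀ (hmin i) (hpos.le.trans (hmin i))

lemma le_of_inner_sub_ne_zero {u : ι → H} {E : ι → ℝ} {i₀ : ι} (hnorm : ∀ i, ⟪u i, u i⟫ = E i)
    (horth : ∀ i j, i ≠ j → ⟪u i, u j⟫ = 0) {Λ : ℝ} {v : H} (hv1 : ⟪v, u i₀⟫ = E i₀)
    (hv2 : ∀ i, i ≠ i₀ → E i < Λ → ⟪v, u i⟫ = 0) {i : ι} (hi : ⟪u i, v - u i₀⟫ ≠ 0) :
    Λ ≤ E i := by
  contrapose! hi
  rw [inner_sub_right, real_inner_comm]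
  obtain rfl | hne := eq_or_ne i i₀
  · rw [hv1, hnorm, sub_self]
  · rw [hv2 i hne hi, horth i i₀ hne, sub_zero]

lemma norm_sub_le_of_inner_sub_eq_zero {x y : H} (h : ⟪x - y, y⟫ = 0) : ‖x - y‖ ≤ ‖x‖ := by
  have pythagoras := norm_add_sq_eq_norm_sq_add_norm_sq_of_inner_eq_zero (x - y) y h
  rw [sub_add_cancel] at pythagoras
  nlinarith [norm_nonneg x, mul_self_nonneg ‖y‖]

lemma add_fixed_add_map_defect {B : H →L[ℝ] H} {P : H →ₗ[ℝ] H} {w : H} (hw : B w = w) (x : H) :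
    x + w + P (B (x + w) - (x + w)) = B x + (x - B x - P (x - B x)) + w := by
  have : B (x + w) - (x + w) = -(x - B x) := by rw [map_add, hw]; abel
  rw [this, map_neg]
  abel

theorem statement12_general (u : ι → H) (E : ι → ℝ) (i₀ : ι) (hpos : 0 < E i₀)
    (hmin : ∀ i, E i₀ ≤ E i) (hnorm : ∀ i, ⟪u i, u i⟫ = E i)
    (horth : ∀ i j, i ≠ j → ⟪u i, u j⟫ = 0)
    (hcomplete : (Submodule.span ℝ (Set.range u)).topologicalClosure = ⊤)
    (B : H →L[ℝ] H) (hB : ∀ i, B (u i) = (E i₀ / E i) • u i)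
    (Λ : ℝ) (hΛ : E i₀ ≤ Λ)
    (Phat : H →ₗ[ℝ] H) (γ : ℝ) (hP : ∀ v : H, ‖v - Phat v‖ ≤ γ * ‖v‖)
    (v0 : H) (hv1 : ⟪v0, u i₀⟫ = E i₀)
    (hv2 : ∀ i, i ≠ i₀ → E i < Λ → ⟪v0, u i⟫ = 0)
    (tv : ℕ → H) (h0 : tv 0 = v0)
    (hrec : ∀ k : ℕ, tv (k + 1) = tv k + Phat (B (tv k) - tv k)) (k : ℕ) :
    ‖tv k - u i₀‖ ≤ (E i₀ / Λ) ^ k * ‖v0 - u i₀‖ +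
        2 * γ * (∑ ν ∈ Finset.range k, (1 + 2 * γ) ^ ν) * ‖v0‖ ∧
      (γ ≤ (E i₀ / Λ) ^ k →
        ‖tv k - u i₀‖ ≤
          (E i₀ / Λ) ^ k * (‖v0 - u i₀‖ + 2 * (1 + 2 * γ) ^ k * ‖v0‖)) := by
  have hdiag := isDiagonalContraction_of_eigenvalues hpos hmin hnorm horth hcomplete hB
  have hγ : 0 ≤ γ := nonneg_of_mul_nonneg_left ((norm_nonneg _).trans (hP (u i₀)))
    (norm_pos_iff.mpr (hdiag.ne_zero i₀))
  let Q : H →ₗ[ℝ] H := LinearMap.id - Phat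
  have hQ (v : H) : ‖Q v‖ ≤ γ * ‖v‖ := hP v
  have hq0 : 0 ≤ E i₀ / Λ := div_nonneg hpos.le (hpos.le.trans hΛ)
  have hq1 : E i₀ / Λ ≤ 1 := div_le_one_of_le₀ hΛ (hpos.le.trans hΛ)
  have entry_le (i : ι) (hi : ⟪u i, v0 - u i₀⟫ ≠ 0) : E i₀ / E i ≤ E i₀ / Λ :=
    div_le_div_of_nonneg_left hpos.le (hpos.trans_le hΛ)
      (le_of_inner_sub_ne_zero hnorm horth hv1 hv2 hi)
  have fixed : B (u i₀) = u i₀ := by rw [hB, div_self hpos.ne', one_smul]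
  have initial_le : ‖v0 - u i₀‖ ≤ ‖v0‖ :=
    norm_sub_le_of_inner_sub_eq_zero (by rw [inner_sub_left, hv1, hnorm, sub_self])
  obtain ⟨e, rfl⟩ : ∃ e : ℕ → H, tv = fun k => e k + u i₀ := ⟨fun k => tv k - u i₀, by simp⟩
  subst h0
  simp only [add_sub_cancel_right] at entry_le initial_le hrec ⊢
  have he (k : ℕ) : e (k + 1) = B (e k) + Q (e k - B (e k)) :=
    add_right_cancel ((hrec k).trans (add_fixed_add_map_defect fixed (e k)))
  have decay := hdiag.norm_pow_apply_le_pow_mul hq0 entry_le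
  have split : ‖e k‖ ≤ (E i₀ / Λ) ^ k * ‖e 0‖ + ‖e k - (B ^ k) (e 0)‖ :=
    (norm_le_norm_add_norm_sub' _ _).trans (add_le_add_left (decay k) _)
  refine ⟨split.trans (add_le_add_right ?_ _), fun hγq => split.trans ?_⟩
  · refine (hdiag.norm_perturbed_sub_pow_le hγ hQ he k).trans ?_
    gcongr <;> linarith
  · have := hdiag.norm_perturbed_sub_pow_le_of_le_pow hγ hQ he hq0 hq1 decay hγq
    have := mul_le_mul_of_nonneg_left initial_le
      (show 0 ≤ 2 * (E i₀ / Λ) ^ k * (1 + 2 * γ) ^ k by positivity)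
    linarith

end InexactIteration

/-- abstract form of Theorem 4.3 of the paper: convergence of the
inexact block iteration. With a complete orthogonal family `(u i)` with `a(uᵢ,uᵢ) = Eᵢ`,
`0 < E₀ ≤ E₁ ≤ ⋯` (0-based indexing, so `q = E₀/E_K` is the paper's `E^1/E^{K+1}`),
`B uᵢ = (E₀/Eᵢ) uᵢ` (so `|||B||| ≤ 1`), a linear preconditioner `P̂` with
`|||v - P̂ v||| ≤ γ |||v|||`, and a starting vector `v⁽⁰⁾` with `a(v⁽⁰⁾,u₀) = E₀` and
`a(v⁽⁰⁾,uᵢ) = 0` for `1 ≤ i < K`, the inexact iterates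
`ṽ⁽ᵏ⁾ = ṽ⁽ᵏ⁻¹⁾ + P̂(B ṽ⁽ᵏ⁻¹⁾ - ṽ⁽ᵏ⁻¹⁾)` satisfy
`|||ṽ⁽ᵏ⁾ - u₀||| ≤ q^k |||v⁽⁰⁾ - u₀||| + 2γ (Σ_{ν<k} (1+2γ)^ν) |||v⁽⁰⁾|||`; in
particular, if `γ ≤ q^k = tol`, then
`|||ṽ⁽ᵏ⁾ - u₀||| ≤ tol (|||v⁽⁰⁾ - u₀||| + 2 (1+2γ)^k |||v⁽⁰⁾|||)`. -/
theorem statement12 {H : Type*} [NormedAddCommGroup H] [InnerProductSpace ℝ H]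
    [CompleteSpace H]
    (u : ℕ → H) (E : ℕ → ℝ) (hpos : 0 < E 0) (hmono : Monotone E)
    (hnorm : ∀ i, ⟪u i, u i⟫ = E i)
    (horth : ∀ i j, i ≠ j → ⟪u i, u j⟫ = 0)
    (hcomplete : (Submodule.span ℝ (Set.range u)).topologicalClosure = ⊤)
    (B : H →L[ℝ] H) (hB : ∀ i, B (u i) = (E 0 / E i) • u i)
    (K : ℕ) (hK : 1 ≤ K)
    (Phat : H →ₗ[ℝ] H) (γ : ℝ) (hP : ∀ v : H, ‖v - Phat v‖ ≤ γ * ‖v‖)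
    (v0 : H) (hv1 : ⟪v0, u 0⟫ = E 0)
    (hv2 : ∀ i, 1 ≤ i → i < K → ⟪v0, u i⟫ = 0)
    (tv : ℕ → H) (h0 : tv 0 = v0)
    (hrec : ∀ k : ℕ, tv (k + 1) = tv k + Phat (B (tv k) - tv k)) :
    ∀ k : ℕ,
      ‖tv k - u 0‖ ≤ (E 0 / E K) ^ k * ‖v0 - u 0‖ +
          2 * γ * (∑ ν ∈ Finset.range k, (1 + 2 * γ) ^ ν) * ‖v0‖ ∧
        (γ ≤ (E 0 / E K) ^ k →
          ‖tv k - u 0‖ ≤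
            (E 0 / E K) ^ k * (‖v0 - u 0‖ + 2 * (1 + 2 * γ) ^ k * ‖v0‖)) := by
  exact statement12_general u E 0 hpos (fun i => hmono (Nat.zero_le i)) hnorm horth hcomplete B hB
    (E K) (hmono (Nat.zero_le K)) Phat γ hP v0 hv1
    (fun i hi hlt => hv2 i (Nat.one_le_iff_ne_zero.mpr hi) (hmono.reflect_lt hlt)) tv h0 hrec
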